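/- (Continuous dependence for the Volterra integral equation) Let 0 < α ≤ 1, ψ increasing C¹ on I, 0 ≤ N < 1, r continuous nonnegative on a ≤ σ ≤ t with t ↦ r(t,t) nondecreasing and r(t,σ) ≤ r(t,t), and ε₁ > 0. Suppose |f(t,u,v)−f(t,ū,v̄)| ≤ N(|u−ū|+|v−v̄|), |k(t,σ,u)−k(t,σ,v)| ≤ r(t,σ)|u−v|, and for all t ∈ I, |f(t, y(t), (1/Γ(α))∫_a^t ψ'(σ)(ψ(t)−ψ(σ))^{α−1} k(t,σ,y(σ))dσ) − f̄(t, y(t), (1/Γ(α))∫_a^t ψ'(σ)(ψ(t)−ψ(σ))^{α−1} k̄(t,σ,y(σ))dσ)| ≤ ε₁. If x solves x(t) = f(t, x(t), (1/Γ(α))∫_a^t ψ'(σ)(ψ(t)−ψ(σ))^{α−1}k(t,σ,x(σ))dσ) and y solves the analogous equation with f̄, k̄, then |x(t) − y(t)| ≤ (ε₁/(1−N)) E_α( (N/(1−N)) r(t,t) (ψ(t)−ψ(a))^α ) for all t ∈ I. -/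

import Mathlib

open MeasureTheory Set

/-- One-parameter Mittag-Leffler function `E_α(z) = ∑ z^k / Γ(αk+1)`. -/
noncomputable def ML (α z : ℝ) : ℝ := ∑' k : ℕ, z ^ k / Real.Gamma (α * k + 1)

/-- The inner Volterra integral operator (scalar version). -/
noncomputable def volterraK (α : ℝ) (ψ : ℝ → ℝ) (a : ℝ)
    (k : ℝ → ℝ → ℝ → ℝ) (x : ℝ → ℝ) (t : ℝ) : ℝ :=
  (Real.Gamma α)⁻¹ * ∫ σ in a..t, deriv ψ σ * (ψ t - ψ σ) ^ (α - 1) * k t σ (x σ)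


lemma aux_gamma_lower (s A : ℝ) (hs : 0 ≤ s) (hA : 0 < A) :
    A ^ s * Real.exp (-A) ≤ Real.Gamma (s + 1) := by
  rw [Real.Gamma_eq_integral (by linarith), ← integral_exp_neg_Ioi, ← integral_const_mul]
  have hI := Real.GammaIntegral_convergent (s := s + 1) (by linarith)
  have hsub : Ioi A ⊆ Ioi (0 : ℝ) := Ioi_subset_Ioi hA.le
  refine (setIntegral_mono_on ?_ (hI.mono_set hsub) measurableSet_Ioi ?_).trans
    (setIntegral_mono_set hI ?_ hsub.eventuallyLE)
  · exact (integrableOn_exp_neg_Ioi A).const_mul _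
  · intro x hx
    rw [add_sub_cancel_right, mul_comm]
    exact mul_le_mul_of_nonneg_left (Real.rpow_le_rpow hA.le (le_of_lt hx) hs) (Real.exp_nonneg _)
  · refine ae_restrict_of_forall_mem measurableSet_Ioi fun x hx => ?_
    exact mul_nonneg (Real.exp_nonneg _) (Real.rpow_nonneg (le_of_lt hx) _)

lemma aux_summable (α z : ℝ) (hα : 0 < α) (hz : 0 ≤ z) :
    Summable fun k : ℕ => z ^ k / Real.Gamma (α * k + 1) := by
  set A : ℝ := (z + 1) ^ (α⁻¹) with hAdef
  have hA : 0 < A := Real.rpow_pos_of_pos (by linarith) _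
  have hAα : A ^ α = z + 1 := by
    rw [hAdef, ← Real.rpow_mul (by linarith), inv_mul_cancel₀ hα.ne', Real.rpow_one]
  have hg : Summable fun k : ℕ => Real.exp A * (z / (z + 1)) ^ k := by
    refine (summable_geometric_of_lt_one (by positivity) ?_).mul_left _
    rw [div_lt_one (by linarith)]; linarith
  refine Summable.of_nonneg_of_le (fun k => ?_) (fun k => ?_) hg
  · have := Real.Gamma_pos_of_pos (s := α * k + 1) (by positivity)
    positivity
  · have h := aux_gamma_lower (α * k) A (by positivity) hA
    rw [Real.rpow_mul hA.le, Real.rpow_natCast, hAα] at h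
    have hp : 0 < (z + 1) ^ k * Real.exp (-A) := by positivity
    refine (div_le_div_of_nonneg_left (by positivity) hp h).trans (le_of_eq ?_)
    rw [Real.exp_neg, div_pow]; field_simp

lemma aux_beta (α β c : ℝ) (hα : 0 < α) (hβ : 0 ≤ β) (hc : 0 < c) :
    ∫ s in (0 : ℝ)..c, s ^ β * (c - s) ^ (α - 1) =
      c ^ (α + β) * (Real.Gamma (β + 1) * Real.Gamma α / Real.Gamma (α + β + 1)) := by
  have h1 := Complex.betaIntegral_scaled ((β + 1 : ℝ) : ℂ) (α : ℂ) hc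
  have h2 := Complex.Gamma_mul_Gamma_eq_betaIntegral (s := ((β + 1 : ℝ) : ℂ)) (t := (α : ℂ))
    (by simp; linarith) (by simpa using hα)
  have hG : Complex.Gamma (((β + 1 : ℝ) : ℂ) + (α : ℂ)) = ((Real.Gamma (α + β + 1) : ℝ) : ℂ) := by
    rw [← Complex.Gamma_ofReal]; congr 1; push_cast; ring
  have hG0 : Real.Gamma (α + β + 1) ≠ 0 := (Real.Gamma_pos_of_pos (by linarith)).ne'
  have h3 : Complex.betaIntegral ((β + 1 : ℝ) : ℂ) (α : ℂ) =
      ((Real.Gamma (β + 1) * Real.Gamma α / Real.Gamma (α + β + 1) : ℝ) : ℂ) := by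
    rw [hG, Complex.Gamma_ofReal, Complex.Gamma_ofReal] at h2
    rw [Complex.ofReal_div, Complex.ofReal_mul, h2,
      mul_div_cancel_left₀ _ (by exact_mod_cast hG0)]
  rw [h3] at h1
  have h4 : (c : ℂ) ^ (((β + 1 : ℝ) : ℂ) + (α : ℂ) - 1) = ((c ^ (α + β) : ℝ) : ℂ) := by
    rw [Complex.ofReal_cpow hc.le]; congr 1; push_cast; ring
  rw [h4] at h1
  have h5 : ∫ x in (0 : ℝ)..c, (x : ℂ) ^ (((β + 1 : ℝ) : ℂ) - 1) * ((c : ℂ) - x) ^ ((α : ℂ) - 1)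
      = ((∫ s in (0 : ℝ)..c, s ^ β * (c - s) ^ (α - 1) : ℝ) : ℂ) := by
    rw [← intervalIntegral.integral_ofReal]
    refine intervalIntegral.integral_congr fun x hx => ?_
    rw [uIcc_of_le hc.le] at hx
    rw [Complex.ofReal_mul, Complex.ofReal_cpow hx.1, Complex.ofReal_cpow (sub_nonneg.2 hx.2)]
    push_cast
    simp
  rw [h5] at h1
  exact_mod_cast h1

section kernel

variable {a t α : ℝ} {ψ : ℝ → ℝ}

/-- Kernel integrability. -/
lemma aux_int (hα : 0 < α) (hat : a ≤ t)
    (hmono : StrictMonoOn ψ (Icc a t)) (hc : ContinuousOn ψ (Icc a t))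
    (hd : ∀ σ ∈ Ioo a t, HasDerivAt ψ (deriv ψ σ) σ) :
    IntegrableOn (fun σ => deriv ψ σ * (ψ t - ψ σ) ^ (α - 1)) (Icc a t) := by
  rw [integrableOn_Icc_iff_integrableOn_Ioo]
  have h := integrableOn_image_iff_integrableOn_deriv_smul_of_monotoneOn (s := Ioo a t)
    measurableSet_Ioo (fun x hx => (hd x hx).hasDerivWithinAt)
    (hmono.monotoneOn.mono Ioo_subset_Icc_self) (fun s => (ψ t - s) ^ (α - 1))
  simp only [smul_eq_mul] at h
  rw [← h, hc.image_Ioo_of_strictMonoOn hat hmono, ← integrableOn_Ioc_iff_integrableOn_Ioo]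
  have hle : ψ a ≤ ψ t := hmono.monotoneOn ⟨le_rfl, hat⟩ ⟨hat, le_rfl⟩ hat
  rw [← intervalIntegrable_iff_integrableOn_Ioc_of_le hle]
  have h2 : IntervalIntegrable (fun s : ℝ => s ^ (α - 1)) volume (ψ t - ψ a) (ψ t - ψ t) :=
    intervalIntegral.intervalIntegrable_rpow' (by linarith)
  simpa using h2.comp_sub_left (ψ t)

lemma aux_nonneg (hmono : StrictMonoOn ψ (Icc a t)) :
    ∀ σ ∈ Ioo a t, 0 ≤ deriv ψ σ * (ψ t - ψ σ) ^ (α - 1) := by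
  intro σ hσ
  have hle : ψ σ ≤ ψ t := hmono.monotoneOn ⟨hσ.1.le, hσ.2.le⟩ ⟨(hσ.1.trans hσ.2).le, le_rfl⟩ hσ.2.le
  refine mul_nonneg ?_ (Real.rpow_nonneg (by linarith) _)
  rw [← derivWithin_of_mem_nhds (Icc_mem_nhds hσ.1 hσ.2)]
  exact hmono.monotoneOn.derivWithin_nonneg

lemma aux_val (hα : 0 < α) (hat : a ≤ t)
    (hmono : StrictMonoOn ψ (Icc a t)) (hc : ContinuousOn ψ (Icc a t))
    (hd : ∀ σ ∈ Ioo a t, HasDerivAt ψ (deriv ψ σ) σ) (β : ℝ) (hβ : 0 ≤ β) :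
    ∫ σ in Ioo a t, deriv ψ σ * (ψ t - ψ σ) ^ (α - 1) * (ψ σ - ψ a) ^ β =
      (ψ t - ψ a) ^ (α + β) * (Real.Gamma (β + 1) * Real.Gamma α / Real.Gamma (α + β + 1)) := by
  rcases hat.eq_or_lt with rfl | hlt
  · simp [Real.zero_rpow (by linarith : α + β ≠ 0)]
  have h := integral_image_eq_integral_deriv_smul_of_monotoneOn (s := Ioo a t)
    measurableSet_Ioo (fun x hx => (hd x hx).hasDerivWithinAt)
    (hmono.monotoneOn.mono Ioo_subset_Icc_self)
    (fun s => (ψ t - s) ^ (α - 1) * (s - ψ a) ^ β)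
  simp only [smul_eq_mul, ← mul_assoc] at h
  have hl : ψ a < ψ t := hmono ⟨le_rfl, hat⟩ ⟨hat, le_rfl⟩ hlt
  rw [← h, hc.image_Ioo_of_strictMonoOn hat hmono, ← integral_Ioc_eq_integral_Ioo,
    ← intervalIntegral.integral_of_le hl.le, ← aux_beta α β _ hα hβ (sub_pos.2 hl)]
  have := intervalIntegral.integral_comp_sub_right (a := ψ a) (b := ψ t)
    (fun s => s ^ β * (ψ t - ψ a - s) ^ (α - 1)) (ψ a)
  rw [sub_self] at this
  rw [← this]
  refine intervalIntegral.integral_congr fun s _ => ?_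
  rw [mul_comm]; congr 2; ring

end kernel

/-- The iterated powers. -/
noncomputable def auxP (α : ℝ) (ψ : ℝ → ℝ) (a : ℝ) (j : ℕ) (t : ℝ) : ℝ :=
  (ψ t - ψ a) ^ (α * j) / Real.Gamma (α * j + 1)

lemma aux_gronwall {a T α c R : ℝ} {ψ u : ℝ → ℝ} (hα : 0 < α)
    (hmono : StrictMonoOn ψ (Icc a T)) (hc : ContinuousOn ψ (Icc a T))
    (hd : ∀ σ ∈ Ioo a T, HasDerivAt ψ (deriv ψ σ) σ) (hR : 0 ≤ R)
    (hu : ContinuousOn u (Icc a T))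
    (h : ∀ t ∈ Icc a T, u t ≤ c + R * ((Real.Gamma α)⁻¹ *
      ∫ σ in Ioo a t, deriv ψ σ * (ψ t - ψ σ) ^ (α - 1) * u σ)) :
    ∀ t ∈ Icc a T, u t ≤ c * ML α (R * (ψ t - ψ a) ^ α) := by
  obtain ⟨M, hM⟩ := isCompact_Icc.exists_bound_of_continuousOn hu
  have hΓ : 0 < Real.Gamma α := Real.Gamma_pos_of_pos hα
  have hcp : ∀ j, ContinuousOn (auxP α ψ a j) (Icc a T) := fun j =>
    ((hc.sub continuousOn_const).rpow_const (fun x _ => Or.inr (by positivity))).div_const _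
  have key : ∀ n : ℕ, ∀ t ∈ Icc a T, u t ≤
      c * ∑ j ∈ Finset.range n, R ^ j * auxP α ψ a j t + M * (R ^ n * auxP α ψ a n t) := by
    intro n
    induction n with
    | zero =>
      intro t ht
      simpa [auxP] using (le_abs_self _).trans (hM t ht)
    | succ n ih =>
      intro t ht
      have hsub : Icc a t ⊆ Icc a T := Icc_subset_Icc_right ht.2
      have hsub' : Ioo a t ⊆ Ioo a T := Ioo_subset_Ioo_right ht.2
      have hK := aux_int hα ht.1 (hmono.mono hsub) (hc.mono hsub) (fun σ hσ => hd σ (hsub' hσ))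
      have hint : ∀ g : ℝ → ℝ, ContinuousOn g (Icc a T) →
          IntegrableOn (fun σ => deriv ψ σ * (ψ t - ψ σ) ^ (α - 1) * g σ) (Ioo a t) := fun g hg =>
        (hK.mul_continuousOn (hg.mono hsub) isCompact_Icc).mono_set Ioo_subset_Icc_self
      have hval : ∀ j : ℕ, ∫ σ in Ioo a t, deriv ψ σ * (ψ t - ψ σ) ^ (α - 1) * auxP α ψ a j σ
          = Real.Gamma α * auxP α ψ a (j + 1) t := by
        intro j
        have hv := aux_val hα ht.1 (hmono.mono hsub) (hc.mono hsub) (fun σ hσ => hd σ (hsub' hσ))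
          (α * j) (by positivity)
        have hg : Real.Gamma (α * j + 1) ≠ 0 := (Real.Gamma_pos_of_pos (by positivity)).ne'
        unfold auxP
        simp only [← mul_div_assoc]
        rw [integral_div, hv]
        have e : α + α * j = α * ((j + 1 : ℕ) : ℝ) := by push_cast; ring
        rw [e]
        field_simp
      have hcs : ContinuousOn (fun σ => ∑ j ∈ Finset.range n, R ^ j * auxP α ψ a j σ) (Icc a T) :=
        continuousOn_finsetSum _ fun j _ => continuousOn_const.mul (hcp j)
      have hle : ∫ σ in Ioo a t, deriv ψ σ * (ψ t - ψ σ) ^ (α - 1) * u σ ≤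
          ∫ σ in Ioo a t, deriv ψ σ * (ψ t - ψ σ) ^ (α - 1) *
            (c * ∑ j ∈ Finset.range n, R ^ j * auxP α ψ a j σ + M * (R ^ n * auxP α ψ a n σ)) := by
        refine setIntegral_mono_on (hint u hu) (hint _ ?_) measurableSet_Ioo fun σ hσ => ?_
        · exact (continuousOn_const.mul hcs).add
            (continuousOn_const.mul (continuousOn_const.mul (hcp n)))
        · exact mul_le_mul_of_nonneg_left (ih σ ⟨hσ.1.le, hσ.2.le.trans ht.2⟩)
            (aux_nonneg (hmono.mono hsub) σ hσ)
      have heq : ∫ σ in Ioo a t, deriv ψ σ * (ψ t - ψ σ) ^ (α - 1) *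
            (c * ∑ j ∈ Finset.range n, R ^ j * auxP α ψ a j σ + M * (R ^ n * auxP α ψ a n σ))
          = Real.Gamma α * (c * ∑ j ∈ Finset.range n, R ^ j * auxP α ψ a (j + 1) t
            + M * (R ^ n * auxP α ψ a (n + 1) t)) := by
        have e1 : ∀ σ, deriv ψ σ * (ψ t - ψ σ) ^ (α - 1) *
            (c * ∑ j ∈ Finset.range n, R ^ j * auxP α ψ a j σ + M * (R ^ n * auxP α ψ a n σ))
          = c * ∑ j ∈ Finset.range n, R ^ j *
              (deriv ψ σ * (ψ t - ψ σ) ^ (α - 1) * auxP α ψ a j σ)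
            + M * R ^ n * (deriv ψ σ * (ψ t - ψ σ) ^ (α - 1) * auxP α ψ a n σ) := by
          intro σ
          rw [mul_add, mul_left_comm, Finset.mul_sum]
          congr 1
          · congr 1
            exact Finset.sum_congr rfl fun j _ => by ring
          · ring
        simp_rw [e1]
        have hi : ∀ j, IntegrableOn (fun σ => R ^ j *
              (deriv ψ σ * (ψ t - ψ σ) ^ (α - 1) * auxP α ψ a j σ)) (Ioo a t) := fun j =>
          (hint _ (hcp j)).const_mul _
        rw [integral_add ((integrable_finsetSum _ fun j _ => hi j).const_mul c)
          ((hint _ (hcp n)).const_mul _), integral_const_mul, integral_const_mul,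
          integral_finsetSum _ (fun j _ => hi j), hval]
        simp_rw [integral_const_mul, hval]
        rw [mul_add, mul_left_comm (Real.Gamma α) c, Finset.mul_sum (a := Real.Gamma α)]
        congr 1
        · congr 1
          exact Finset.sum_congr rfl fun j _ => by ring
        · ring
      rw [heq] at hle
      have h1 := h t ht
      have h2 : R * ((Real.Gamma α)⁻¹ *
          ∫ σ in Ioo a t, deriv ψ σ * (ψ t - ψ σ) ^ (α - 1) * u σ) ≤
          R * (c * ∑ j ∈ Finset.range n, R ^ j * auxP α ψ a (j + 1) t
            + M * (R ^ n * auxP α ψ a (n + 1) t)) := by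
        refine mul_le_mul_of_nonneg_left ?_ hR
        rwa [inv_mul_le_iff₀ hΓ]
      have h0 : auxP α ψ a 0 t = 1 := by simp [auxP]
      rw [Finset.sum_range_succ', h0]
      have h3 : ∑ j ∈ Finset.range n, R ^ (j + 1) * auxP α ψ a (j + 1) t
          = R * ∑ j ∈ Finset.range n, R ^ j * auxP α ψ a (j + 1) t := by
        rw [Finset.mul_sum]
        exact Finset.sum_congr rfl fun j _ => by ring
      rw [h3]
      refine (h1.trans (add_le_add_right h2 c)).trans (le_of_eq ?_)
      ring
  intro t ht
  have hle : 0 ≤ ψ t - ψ a :=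
    sub_nonneg.2 (hmono.monotoneOn ⟨le_rfl, ht.1.trans ht.2⟩ ht ht.1)
  have hterm : ∀ j : ℕ, R ^ j * auxP α ψ a j t =
      (R * (ψ t - ψ a) ^ α) ^ j / Real.Gamma (α * j + 1) := by
    intro j
    rw [auxP, Real.rpow_mul hle, Real.rpow_natCast, mul_pow, mul_div_assoc]
  have hs := aux_summable α (R * (ψ t - ψ a) ^ α) hα (by positivity)
  have hlim := (hs.hasSum.tendsto_sum_nat.const_mul c).add
    (hs.tendsto_atTop_zero.const_mul M)
  rw [mul_zero, add_zero] at hlim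
  refine ge_of_tendsto' hlim fun n => ?_
  simpa only [hterm] using key n t ht

theorem volterra_continuous_dependence
    (a b α N ε₁ : ℝ) (ψ : ℝ → ℝ)
    (f fbar : ℝ → ℝ → ℝ → ℝ) (k kbar : ℝ → ℝ → ℝ → ℝ)
    (r : ℝ → ℝ → ℝ) (x y : ℝ → ℝ)
    (hα0 : 0 < α) (hα1 : α ≤ 1) (hab : a ≤ b)
    (hmono : StrictMonoOn ψ (Icc a b)) (hC1ψ : ContDiffOn ℝ 1 ψ (Icc a b))
    (hN0 : 0 ≤ N) (hN1 : N < 1) (hε : 0 < ε₁)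
    (hf : Continuous fun p : ℝ × ℝ × ℝ => f p.1 p.2.1 p.2.2)
    (hfbar : Continuous fun p : ℝ × ℝ × ℝ => fbar p.1 p.2.1 p.2.2)
    (hk : Continuous fun p : ℝ × ℝ × ℝ => k p.1 p.2.1 p.2.2)
    (hkbar : Continuous fun p : ℝ × ℝ × ℝ => kbar p.1 p.2.1 p.2.2)
    (hr : ContinuousOn (fun q : ℝ × ℝ => r q.1 q.2)
      {q : ℝ × ℝ | a ≤ q.2 ∧ q.2 ≤ q.1 ∧ q.1 ≤ b})
    (hr0 : ∀ t σ, a ≤ σ → σ ≤ t → t ≤ b → 0 ≤ r t σ)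
    (hrdiagmono : MonotoneOn (fun t => r t t) (Icc a b))
    (hrdiag : ∀ t σ, a ≤ σ → σ ≤ t → t ≤ b → r t σ ≤ r t t)
    (hfLip : ∀ t u v u' v', |f t u v - f t u' v'| ≤ N * (|u - u'| + |v - v'|))
    (hkLip : ∀ t σ u v, |k t σ u - k t σ v| ≤ r t σ * |u - v|)
    (hclose : ∀ t ∈ Icc a b,
      |f t (y t) (volterraK α ψ a k y t) - fbar t (y t) (volterraK α ψ a kbar y t)| ≤ ε₁)
    (hx : ContinuousOn x (Icc a b)) (hy : ContinuousOn y (Icc a b))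
    (hxsol : ∀ t ∈ Icc a b, x t = f t (x t) (volterraK α ψ a k x t))
    (hysol : ∀ t ∈ Icc a b, y t = fbar t (y t) (volterraK α ψ a kbar y t)) :
    ∀ t ∈ Icc a b,
      |x t - y t| ≤ ε₁ / (1 - N) * ML α (N / (1 - N) * r t t * (ψ t - ψ a) ^ α) := by
  intro T hT
  have hN : 0 < 1 - N := by linarith
  have hsubT : Icc a T ⊆ Icc a b := Icc_subset_Icc_right hT.2
  have hd : ∀ σ ∈ Ioo a b, HasDerivAt ψ (deriv ψ σ) σ := fun σ hσ =>
    ((hC1ψ.differentiableOn one_ne_zero σ ⟨hσ.1.le, hσ.2.le⟩).differentiableAt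
      (Icc_mem_nhds hσ.1 hσ.2)).hasDerivAt
  have hcψ := hC1ψ.continuousOn
  have hrT : 0 ≤ r T T := hr0 T T hT.1 le_rfl hT.2
  have hΓ : 0 < Real.Gamma α := Real.Gamma_pos_of_pos hα0
  refine aux_gronwall (u := fun t => |x t - y t|) (T := T) hα0 (hmono.mono hsubT)
    (hcψ.mono hsubT) (fun σ hσ => hd σ ⟨hσ.1, hσ.2.trans_le hT.2⟩) (by positivity)
    ((hx.sub hy).abs.mono hsubT) ?_ T ⟨hT.1, le_rfl⟩
  intro t ht
  have htb : t ∈ Icc a b := hsubT ht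
  have hsub : Icc a t ⊆ Icc a b := Icc_subset_Icc_right htb.2
  have hK := aux_int hα0 ht.1 (hmono.mono hsub) (hcψ.mono hsub)
    (fun σ hσ => hd σ ⟨hσ.1, hσ.2.trans_le htb.2⟩)
  have hint : ∀ g : ℝ → ℝ, ContinuousOn g (Icc a b) →
      IntegrableOn (fun σ => deriv ψ σ * (ψ t - ψ σ) ^ (α - 1) * g σ) (Ioo a t) := fun g hg =>
    (hK.mul_continuousOn (hg.mono hsub) isCompact_Icc).mono_set Ioo_subset_Icc_self
  have hkc : ∀ z : ℝ → ℝ, ContinuousOn z (Icc a b) →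
      ContinuousOn (fun σ => k t σ (z σ)) (Icc a b) := fun z hz =>
    hk.comp_continuousOn (continuousOn_const.prodMk (continuousOn_id.prodMk hz))
  set J := ∫ σ in Ioo a t, deriv ψ σ * (ψ t - ψ σ) ^ (α - 1) * |x σ - y σ| with hJ
  have hdiff : |volterraK α ψ a k x t - volterraK α ψ a k y t| ≤
      (Real.Gamma α)⁻¹ * (r T T * J) := by
    unfold volterraK
    rw [← mul_sub, abs_mul, abs_of_pos (inv_pos.2 hΓ)]
    refine mul_le_mul_of_nonneg_left ?_ (inv_pos.2 hΓ).le
    rw [intervalIntegral.integral_of_le ht.1, intervalIntegral.integral_of_le ht.1,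
      integral_Ioc_eq_integral_Ioo, integral_Ioc_eq_integral_Ioo,
      ← integral_sub (hint _ (hkc x hx)) (hint _ (hkc y hy)), hJ, ← integral_const_mul]
    refine (abs_integral_le_integral_abs).trans
      (setIntegral_mono_on ?_ ((hint _ (hx.sub hy).abs).const_mul _) measurableSet_Ioo ?_)
    · exact ((hint _ (hkc x hx)).sub (hint _ (hkc y hy))).abs
    · intro σ hσ
      have hn := aux_nonneg (α := α) (hmono.mono hsub) σ hσ
      rw [← mul_sub, abs_mul, abs_of_nonneg hn, mul_left_comm]
      refine mul_le_mul_of_nonneg_left ((hkLip t σ _ _).trans ?_) hn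
      refine mul_le_mul_of_nonneg_right ?_ (abs_nonneg _)
      exact (hrdiag t σ hσ.1.le hσ.2.le htb.2).trans (hrdiagmono htb hT ht.2)
  have h1 := hfLip t (x t) (volterraK α ψ a k x t) (y t) (volterraK α ψ a k y t)
  have h2 := hclose t htb
  rw [← hxsol t htb] at h1
  rw [← hysol t htb] at h2
  have h3 := abs_sub_le (x t) (f t (y t) (volterraK α ψ a k y t)) (y t)
  have h4 := mul_le_mul_of_nonneg_left hdiff hN0
  have h5 : (1 - N) * |x t - y t| ≤ ε₁ + N * ((Real.Gamma α)⁻¹ * (r T T * J)) := by linarith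
  have h6 : |x t - y t| ≤ (ε₁ + N * ((Real.Gamma α)⁻¹ * (r T T * J))) / (1 - N) := by
    rw [le_div_iff₀ hN]; linarith
  refine h6.trans (le_of_eq ?_)
  ring
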